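/- For all nonnegative integers a, b, c: if (a − c)² + (b − c)² = 2c, then c ≤ a + b + 1; if moreover b is even, then a ≤ 2c. -/

import Mathlib

theorem le_add_add_one_of_sq_add_sq_le {R : Type*} [CommRing R] [LinearOrder R]
    [IsStrictOrderedRing R] {a b c : R} (h : (a - c) ^ 2 + (b - c) ^ 2 ≤ 2 * c) :
    c ≤ a + b + 1 := by
  have two_mul_nonneg : 0 ≤ 2 * (a + b + 1 - c) :=
    calc 0
      _ ≤ (a - c + 1) ^ 2 + (b - c + 1) ^ 2 := by positivity
      _ = ((a - c) ^ 2 + (b - c) ^ 2) + 2 * (a + b + 1 - 2 * c) := by ring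
      _ ≤ 2 * c + 2 * (a + b + 1 - 2 * c) := by gcongr
      _ = 2 * (a + b + 1 - c) := by ring
  exact sub_nonneg.mp (nonneg_of_mul_nonneg_right two_mul_nonneg two_pos)

-- Integrality matters: over `ℚ` the claim fails for `x = 1`, `c = 1 / 2`.
theorem abs_le_of_sq_le_two_mul {x c : ℤ} (h : x ^ 2 ≤ 2 * c) : |x| ≤ c := by
  have c_nonneg : 0 ≤ c := by linarith [sq_nonneg x]
  have sq_lt : x ^ 2 < (c + 1) ^ 2 :=
    calc x ^ 2
      _ ≤ 2 * c := h
      _ < c ^ 2 + 2 * c + 1 := by linarith [sq_nonneg c]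
      _ = (c + 1) ^ 2 := by ring
  exact Int.lt_add_one_iff.mp (abs_lt_of_sq_lt_sq sq_lt (by linarith))

theorem vieta_lemma_mu3_general {a b c : ℤ} (h : (a - c) ^ 2 + (b - c) ^ 2 ≤ 2 * c) :
    c ≤ a + b + 1 ∧ a ≤ 2 * c := by
  have abs_sub_le : |a - c| ≤ c :=
    abs_le_of_sq_le_two_mul ((le_add_of_nonneg_right (sq_nonneg (b - c))).trans h)
  exact ⟨le_add_add_one_of_sq_add_sq_le h, by linarith [le_of_abs_le abs_sub_le]⟩

/-- Quadratic Diophantine lemma (Vieta): for nonnegative integers `a, b, c`, if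
`(a − c)² + (b − c)² = 2c` then `c ≤ a + b + 1`, and if moreover `b` is even then
`a ≤ 2c`. -/
theorem vieta_lemma_mu3 (a b c : ℕ)
    (h : ((a : ℤ) - c) ^ 2 + ((b : ℤ) - c) ^ 2 = 2 * c) :
    c ≤ a + b + 1 ∧ (Even b → a ≤ 2 * c) := by
  obtain ⟨hc, ha⟩ := vieta_lemma_mu3_general h.le
  exact ⟨by exact_mod_cast hc, fun _ => by exact_mod_cast ha⟩
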